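/- arXiv:1710.08017 — 2 statements merged into one kernel-verified Lean document; each statement's English description precedes it below -/
import Mathlib

section
/- (Approximation lemma) Let α, B > 0, let f₀ ∈ 𝔠^{α,B}([0,1]^p) be in the α-Hölder class with envelope B, let m ≥ α be the polynomial degree, fix 1 < h̲ < h̄ < ∞, and let P_x be a distribution on [0,1]^p with density p_x bounded above by p̄ < ∞. Then there exists a constant C₁ > 0 (depending only on α, B, p, m, h̲, h̄, p̄) such that for all sufficiently small ε > 0 the following holds: for every integer K ≥ ε^{−1/α}, every bandwidth h with Kh ∈ [h̲, h̄], every choice of centers μ_k ∈ X_K(k), and every coefficient array (ξ_{ks}) with |ξ_{ks}| ≤ B for all k ∈ [K]^p and |s| ≤ m which satisfies max_{k ∈ [K]^p} max_{|s| ≤ ⌈α−1⌉} |ξ_{ks} − D^s f₀(μ_k^⋆)/(s_1!⋯s_p!)| ≤ ε, the function f(x) = Σ_{k ∈ [K]^p} Σ_{s : |s| ≤ m} ξ_{ks} ψ_{ks}(x) satisfies ∫_{[0,1]^p} (f(x) − f₀(x))² p_x(x) dx < C₁ ε². -/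
open MeasureTheory Filter Real Matrix
open scoped ENNReal NNReal BigOperators Classical

noncomputable section

namespace KMP

/-- The unit hypercube `[0,1]^p`. -/
def cube (p : ℕ) : Set (Fin p → ℝ) := {x | ∀ j, 0 ≤ x j ∧ x j ≤ 1}

/-- A boxed kernel: continuous, `[0,1]`-valued, supported on the closed unit sup-norm ball,
nonincreasing in the sup-norm (`‖·‖` on `Fin p → ℝ` is the sup-norm). -/
def IsBoxedKernel {p : ℕ} (φ : (Fin p → ℝ) → ℝ) : Prop :=
  Continuous φ ∧ (∀ u, 0 ≤ φ u ∧ φ u ≤ 1) ∧ (∀ u, 1 < ‖u‖ → φ u = 0) ∧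
    ∀ u v, ‖u‖ ≤ ‖v‖ → φ v ≤ φ u

/-- The block `X_K(k) = ∏_j ((k_j-1)/K, k_j/K]`; here `k j : Fin K` encodes `k_j - 1`. -/
def block {p : ℕ} (K : ℕ) (k : Fin p → Fin K) : Set (Fin p → ℝ) :=
  {x | ∀ j, ((k j : ℕ) : ℝ) / K < x j ∧ x j ≤ (((k j : ℕ) : ℝ) + 1) / K}

/-- The closure of the block `X_K(k)`. -/
def blockCl {p : ℕ} (K : ℕ) (k : Fin p → Fin K) : Set (Fin p → ℝ) :=
  {x | ∀ j, ((k j : ℕ) : ℝ) / K ≤ x j ∧ x j ≤ (((k j : ℕ) : ℝ) + 1) / K}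

/-- The center `μ_k^⋆` of the block `X_K(k)`. -/
def center {p : ℕ} (K : ℕ) (k : Fin p → Fin K) : Fin p → ℝ :=
  fun j => (2 * ((k j : ℕ) : ℝ) + 1) / (2 * K)

/-- Multi-indices `s ∈ {0,…,m}^p` with `|s| ≤ m`. -/
def mIdx (p m : ℕ) : Finset (Fin p → Fin (m + 1)) :=
  Finset.univ.filter fun s => (∑ j, (s j : ℕ)) ≤ m

/-- Degree `|s|` of a multi-index. -/
def deg {p m : ℕ} (s : Fin p → Fin (m + 1)) : ℕ := ∑ j, (s j : ℕ)

/-- Kernel mixture weight `w_k(x) = φ_h(x-μ_k) / ∑_l φ_h(x-μ_l)`. -/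
def weight {p : ℕ} (φ : (Fin p → ℝ) → ℝ) (K : ℕ) (h : ℝ)
    (μ : (Fin p → Fin K) → Fin p → ℝ) (k : Fin p → Fin K) (x : Fin p → ℝ) : ℝ :=
  φ (fun j => (x j - μ k j) / h) / ∑ l : Fin p → Fin K, φ (fun j => (x j - μ l j) / h)

/-- Monomial `(x - μ_k^⋆)^s`. -/
def mono {p : ℕ} (K m : ℕ) (k : Fin p → Fin K) (s : Fin p → Fin (m + 1))
    (x : Fin p → ℝ) : ℝ :=
  ∏ j, (x j - center K k j) ^ (s j : ℕ)

/-- A kernel mixture of polynomials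
`f(x) = ∑_k ∑_{|s| ≤ m} ξ_{ks} w_k(x) (x - μ_k^⋆)^s`. -/
def kmpFun {p : ℕ} (φ : (Fin p → ℝ) → ℝ) (K m : ℕ) (h : ℝ)
    (μ : (Fin p → Fin K) → Fin p → ℝ)
    (ξ : (Fin p → Fin K) → (Fin p → Fin (m + 1)) → ℝ) (x : Fin p → ℝ) : ℝ :=
  ∑ k : Fin p → Fin K, ∑ s ∈ mIdx p m, ξ k s * weight φ K h μ k x * mono K m k s x

/-- Partial derivative in the `j`-th coordinate direction. -/
def pderiv1 {p : ℕ} (j : Fin p) (f : (Fin p → ℝ) → ℝ) : (Fin p → ℝ) → ℝ :=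
  fun x => fderiv ℝ f x (Pi.single j 1)

/-- Mixed partial derivative `D^s f`. -/
def mderiv {p : ℕ} (s : Fin p → ℕ) (f : (Fin p → ℝ) → ℝ) : (Fin p → ℝ) → ℝ :=
  (List.finRange p).foldr (fun j g => (pderiv1 j)^[s j] g) f

/-- Degree of an `ℕ`-valued multi-index. -/
def degN {p : ℕ} (s : Fin p → ℕ) : ℕ := ∑ j, s j

/-- Euclidean norm on `Fin p → ℝ`. -/
def eucNorm {p : ℕ} (x : Fin p → ℝ) : ℝ := Real.sqrt (∑ j, (x j) ^ 2)

/-- `⌈α - 1⌉` (as a natural number; it is `0` when `α ≤ 1`). -/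
def hOrder (α : ℝ) : ℕ := ⌈α - 1⌉₊

/-- The α-Hölder class with envelope `B` on `[0,1]^p`: `⌈α-1⌉`-times continuously
differentiable, and the sum of the sup-norm bound on all derivatives of order `≤ ⌈α-1⌉`
and the Hölder constant of the derivatives of order `⌈α-1⌉` is at most `B`. -/
def IsHolder (p : ℕ) (α B : ℝ) (f : (Fin p → ℝ) → ℝ) : Prop :=
  ContDiff ℝ (hOrder α : ℕ∞) f ∧
    ∃ B₁ B₂ : ℝ, 0 ≤ B₁ ∧ 0 ≤ B₂ ∧ B₁ + B₂ ≤ B ∧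
      (∀ s : Fin p → ℕ, degN s ≤ hOrder α → ∀ x ∈ cube p, |mderiv s f x| ≤ B₁) ∧
      (∀ s : Fin p → ℕ, degN s = hOrder α → ∀ x ∈ cube p, ∀ y ∈ cube p, x ≠ y →
        |mderiv s f x - mderiv s f y| ≤ B₂ * eucNorm (x - y) ^ (α - (degN s : ℝ)))

/-- The `N(0, σ²)` density `φ_σ`. -/
def gaussD (σ t : ℝ) : ℝ := (σ * Real.sqrt (2 * π))⁻¹ * Real.exp (-t ^ 2 / (2 * σ ^ 2))

lemma pderiv1_contDiff {p : ℕ} (j : Fin p) (n : ℕ) (f : (Fin p → ℝ) → ℝ)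
    (hf : ContDiff ℝ ((n + 1 : ℕ) : WithTop ℕ∞) f) : ContDiff ℝ (n : WithTop ℕ∞) (pderiv1 j f) := by
  unfold pderiv1
  have h1 : ContDiff ℝ (n : WithTop ℕ∞) (fderiv ℝ f) :=
    hf.fderiv_right (by push_cast; exact le_rfl)
  exact h1.clm_apply contDiff_const

lemma iter_contDiff {p : ℕ} (j : Fin p) (a : ℕ) : ∀ (n : ℕ) (f : (Fin p → ℝ) → ℝ),
    ContDiff ℝ ((n + a : ℕ) : WithTop ℕ∞) f →
    ContDiff ℝ (n : WithTop ℕ∞) ((pderiv1 j)^[a] f) := by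
  induction a with
  | zero => intro n f hf; simpa using hf
  | succ a ih =>
    intro n f hf
    rw [Function.iterate_succ_apply]
    exact ih n _ (pderiv1_contDiff j (n + a) f hf)

lemma pderiv1_comm {p : ℕ} (i j : Fin p) (f : (Fin p → ℝ) → ℝ)
    (hf : ContDiff ℝ ((2 : ℕ) : WithTop ℕ∞) f) :
    pderiv1 i (pderiv1 j f) = pderiv1 j (pderiv1 i f) := by
  have h1 : ContDiff ℝ ((1 : ℕ) : WithTop ℕ∞) (fderiv ℝ f) :=
    hf.fderiv_right (by norm_num)
  have hd : Differentiable ℝ (fderiv ℝ f) := h1.differentiable (by norm_num)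
  have key : ∀ (a b : Fin p) (x : Fin p → ℝ), pderiv1 a (pderiv1 b f) x
      = fderiv ℝ (fderiv ℝ f) x (Pi.single a 1) (Pi.single b 1) := by
    intro a b x
    unfold pderiv1
    rw [fderiv_clm_apply (hd x) (differentiableAt_const _)]
    simp
  funext x
  rw [key, key]
  have hs : IsSymmSndFDerivAt ℝ f x := by
    apply (hf.contDiffAt).isSymmSndFDerivAt
    simp
  exact hs _ _

lemma iter_comm {p : ℕ} (i j : Fin p) (a : ℕ) : ∀ (f : (Fin p → ℝ) → ℝ),
    ContDiff ℝ ((a + 1 : ℕ) : WithTop ℕ∞) f →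
    (pderiv1 i)^[a] (pderiv1 j f) = pderiv1 j ((pderiv1 i)^[a] f) := by
  induction a with
  | zero => intro f hf; rfl
  | succ a ih =>
    intro f hf
    rw [Function.iterate_succ_apply, Function.iterate_succ_apply,
      pderiv1_comm i j f (hf.of_le (by norm_cast; omega)), ih]
    exact pderiv1_contDiff i _ f hf

def mdL {p : ℕ} (l : List (Fin p)) (s : Fin p → ℕ) (f : (Fin p → ℝ) → ℝ) : (Fin p → ℝ) → ℝ :=
  l.foldr (fun j g => (pderiv1 j)^[s j] g) f

lemma mdL_contDiff {p : ℕ} (l : List (Fin p)) (s : Fin p → ℕ) : ∀ (n : ℕ) (f : (Fin p → ℝ) → ℝ),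
    ContDiff ℝ ((n + (l.map s).sum : ℕ) : WithTop ℕ∞) f →
    ContDiff ℝ (n : WithTop ℕ∞) (mdL l s f) := by
  induction l with
  | nil => intro n f hf; simpa [mdL] using hf
  | cons i l ih =>
    intro n f hf
    have := ih (n + s i) f (by
      simp only [List.map_cons, List.sum_cons] at hf
      rwa [← add_assoc] at hf)
    exact iter_contDiff i (s i) n _ this

lemma mdL_comm {p : ℕ} (j : Fin p) (s : Fin p → ℕ) (f : (Fin p → ℝ) → ℝ) (l : List (Fin p)) :
    ContDiff ℝ (((l.map s).sum + 1 : ℕ) : WithTop ℕ∞) f →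
    mdL l s (pderiv1 j f) = pderiv1 j (mdL l s f) := by
  induction l with
  | nil => intro hf; rfl
  | cons i l ih =>
    intro hf
    simp only [List.map_cons, List.sum_cons] at hf
    have h1 := ih (hf.of_le (by norm_cast; omega))
    change (pderiv1 i)^[s i] (mdL l s (pderiv1 j f)) = pderiv1 j ((pderiv1 i)^[s i] (mdL l s f))
    rw [h1, iter_comm]
    apply mdL_contDiff
    convert hf using 2
    omega

lemma mdL_congr {p : ℕ} (s t : Fin p → ℕ) (f : (Fin p → ℝ) → ℝ) (l : List (Fin p))
    (h : ∀ i ∈ l, s i = t i) : mdL l s f = mdL l t f := by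
  induction l with
  | nil => rfl
  | cons i l ih =>
    change (pderiv1 i)^[s i] (mdL l s f) = (pderiv1 i)^[t i] (mdL l t f)
    rw [ih (fun k hk => h k (List.mem_cons_of_mem _ hk)), h i List.mem_cons_self]

lemma mdL_succ {p : ℕ} (j : Fin p) (s : Fin p → ℕ) (f : (Fin p → ℝ) → ℝ) (l : List (Fin p)) :
    l.Nodup → j ∈ l → ContDiff ℝ (((l.map s).sum + 1 : ℕ) : WithTop ℕ∞) f →
    mdL l (s + Pi.single j 1) f = mdL l s (pderiv1 j f) := by
  induction l with
  | nil => intro _ h; simp at h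
  | cons i l ih =>
    intro hn hj hf
    simp only [List.map_cons, List.sum_cons] at hf
    have hn' := List.nodup_cons.1 hn
    change (pderiv1 i)^[(s + Pi.single j 1 : Fin p → ℕ) i] (mdL l (s + Pi.single j 1) f)
      = (pderiv1 i)^[s i] (mdL l s (pderiv1 j f))
    by_cases hij : i = j
    · subst hij
      rw [mdL_congr (s + Pi.single i 1) s f l (by
        intro k hk
        have : k ≠ i := by rintro rfl; exact hn'.1 hk
        simp [this])]
      rw [mdL_comm i s f l (hf.of_le (by norm_cast; omega))]
      simp [Function.iterate_succ_apply]
    · have hj' : j ∈ l := by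
        rcases List.mem_cons.1 hj with h | h
        · exact absurd h.symm hij
        · exact h
      rw [ih hn'.2 hj' (hf.of_le (by norm_cast; omega))]
      simp [hij]

lemma mderiv_succ {p : ℕ} (j : Fin p) (s : Fin p → ℕ) (f : (Fin p → ℝ) → ℝ)
    (hf : ContDiff ℝ ((degN s + 1 : ℕ) : WithTop ℕ∞) f) :
    mderiv (s + Pi.single j 1) f = mderiv s (pderiv1 j f) := by
  apply mdL_succ j s f _ (List.nodup_finRange p) (List.mem_finRange j)
  have : ((List.finRange p).map s).sum = degN s := by
    unfold degN
    exact (Fin.sum_univ_def s).symm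
  rwa [this]

lemma mderiv_zero {p : ℕ} (f : (Fin p → ℝ) → ℝ) : mderiv (0 : Fin p → ℕ) f = f := by
  have : ∀ l : List (Fin p), mdL l 0 f = f := by
    intro l
    induction l with
    | nil => rfl
    | cons i l ih => exact ih
  exact this _

def idx (p r : ℕ) : Finset (Fin p → ℕ) :=
  (Fintype.piFinset fun _ => Finset.range (r + 1)).filter fun s => degN s ≤ r

lemma mem_idx {p r : ℕ} (s : Fin p → ℕ) : s ∈ idx p r ↔ degN s ≤ r := by
  unfold idx
  simp only [Finset.mem_filter, Fintype.mem_piFinset, Finset.mem_range, and_iff_right_iff_imp]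
  intro h i
  have : s i ≤ degN s := Finset.single_le_sum (f := s) (fun _ _ => Nat.zero_le _) (Finset.mem_univ i)
  omega

def fac {p : ℕ} (s : Fin p → ℕ) : ℝ := ∏ j, (Nat.factorial (s j) : ℝ)
def vpow {p : ℕ} (v : Fin p → ℝ) (s : Fin p → ℕ) : ℝ := ∏ j, v j ^ s j

lemma degN_add {p : ℕ} (s t : Fin p → ℕ) : degN (s + t) = degN s + degN t := by
  simp [degN, Finset.sum_add_distrib]
lemma degN_single {p : ℕ} (j : Fin p) : degN (Pi.single j 1 : Fin p → ℕ) = 1 := by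
  simp [degN]

lemma vpow_succ {p : ℕ} (v : Fin p → ℝ) (s : Fin p → ℕ) (j : Fin p) :
    vpow v (s + Pi.single j 1) = v j * vpow v s := by
  unfold vpow
  simp only [Pi.add_apply, pow_add, Finset.prod_mul_distrib]
  rw [mul_comm]
  congr 1
  rw [Finset.prod_eq_single j]
  · simp
  · intro b _ hb; simp [hb]
  · simp

lemma fac_pos {p : ℕ} (s : Fin p → ℕ) : 0 < fac s :=
  Finset.prod_pos fun j _ => by exact_mod_cast Nat.factorial_pos _

lemma fac_succ {p : ℕ} (s : Fin p → ℕ) (j : Fin p) :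
    fac (s + Pi.single j 1) = (s j + 1) * fac s := by
  unfold fac
  rw [← Finset.mul_prod_erase _ _ (Finset.mem_univ j),
    ← Finset.mul_prod_erase (f := fun j => (Nat.factorial (s j) : ℝ)) _ (h := Finset.mem_univ j)]
  have : ∏ x ∈ Finset.univ.erase j, (Nat.factorial ((s + Pi.single j 1 : Fin p → ℕ) x) : ℝ)
      = ∏ x ∈ Finset.univ.erase j, (Nat.factorial (s x) : ℝ) := by
    apply Finset.prod_congr rfl
    intro x hx
    simp [Finset.ne_of_mem_erase hx]
  rw [this]
  simp [Nat.factorial_succ]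
  ring

lemma reindex {p : ℕ} (r : ℕ) (j : Fin p) (G : (Fin p → ℕ) → ℝ) :
    ∑ s ∈ idx p (r + 1), (s j : ℝ) / fac s * G s
      = ∑ t ∈ idx p r, 1 / fac t * G (t + Pi.single j 1) := by
  have hinj : Function.Injective (fun t : Fin p → ℕ => t + Pi.single j 1) :=
    fun a b h => add_right_cancel h
  have h1 : ∑ t ∈ idx p r, 1 / fac t * G (t + Pi.single j 1)
      = ∑ s ∈ (idx p r).image (fun t => t + Pi.single j 1), (s j : ℝ) / fac s * G s := by
    rw [Finset.sum_image (fun a _ b _ h => hinj h)]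
    apply Finset.sum_congr rfl
    intro t _
    rw [fac_succ]
    have := (fac_pos t).ne'
    have h2 : ((t j : ℝ) + 1) ≠ 0 := by positivity
    simp
    left
    field_simp
  rw [h1]
  symm
  apply Finset.sum_subset
  · intro s hs
    obtain ⟨t, ht, rfl⟩ := Finset.mem_image.1 hs
    rw [mem_idx] at ht ⊢
    rw [degN_add, degN_single]; omega
  · intro s hs hns
    have : s j = 0 := by
      by_contra hj
      apply hns
      refine Finset.mem_image.2 ⟨s - Pi.single j 1, ?_, ?_⟩
      · have : s - Pi.single j 1 + Pi.single j 1 = s := by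
          funext i
          by_cases hi : i = j
          · subst hi; simp; omega
          · simp [hi]
        have h3 := congrArg degN this
        rw [degN_add, degN_single] at h3
        rw [mem_idx] at hs ⊢
        omega
      · funext i
        by_cases hi : i = j
        · subst hi; simp; omega
        · simp [hi]
    simp [this]

def tay {p : ℕ} (r : ℕ) (f : (Fin p → ℝ) → ℝ) (c v : Fin p → ℝ) : ℝ :=
  ∑ s ∈ idx p r, mderiv s f c / fac s * vpow v s

lemma vpow_smul {p : ℕ} (t : ℝ) (v : Fin p → ℝ) (s : Fin p → ℕ) :
    vpow (t • v) s = t ^ degN s * vpow v s := by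
  simp [vpow, degN, mul_pow, Finset.prod_mul_distrib, Finset.prod_pow_eq_pow_sum]

lemma tay_deriv {p : ℕ} (r : ℕ) (f : (Fin p → ℝ) → ℝ)
    (hf : ContDiff ℝ ((r + 1 : ℕ) : WithTop ℕ∞) f) (c v : Fin p → ℝ) (t : ℝ) :
    HasDerivAt (fun t : ℝ => tay (r + 1) f c (t • v))
      (∑ j, v j * tay r (pderiv1 j f) c (t • v)) t := by
  have h0 : HasDerivAt (fun t : ℝ => tay (r + 1) f c (t • v))
      (∑ s ∈ idx p (r + 1), mderiv s f c / fac s * (((degN s : ℝ) * t ^ (degN s - 1)) * vpow v s)) t := by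
    unfold tay
    apply HasDerivAt.fun_sum
    intro s _
    simp only [vpow_smul]
    exact ((hasDerivAt_pow (degN s) t).mul_const _).const_mul _
  convert h0 using 1
  have h1 : ∀ s : Fin p → ℕ, mderiv s f c / fac s * (((degN s : ℝ) * t ^ (degN s - 1)) * vpow v s)
      = ∑ j, (s j : ℝ) / fac s * (mderiv s f c * t ^ (degN s - 1) * vpow v s) := by
    intro s
    rw [← Finset.sum_mul, ← Finset.sum_div]
    simp only [degN]
    push_cast
    ring
  simp only [h1]
  rw [Finset.sum_comm]
  apply Finset.sum_congr rfl
  intro j _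
  rw [reindex r j (fun s => mderiv s f c * t ^ (degN s - 1) * vpow v s)]
  unfold tay
  rw [Finset.mul_sum]
  apply Finset.sum_congr rfl
  intro s hs
  rw [mem_idx] at hs
  rw [vpow_succ, vpow_smul, degN_add, degN_single, mderiv_succ j s f (hf.of_le (by norm_cast; omega))]
  simp
  ring

lemma line_deriv {p : ℕ} (f : (Fin p → ℝ) → ℝ)
    (hf : Differentiable ℝ f) (c v : Fin p → ℝ) (t : ℝ) :
    HasDerivAt (fun t : ℝ => f (c + t • v)) (∑ j, v j * pderiv1 j f (c + t • v)) t := by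
  have h1 : HasDerivAt (fun t : ℝ => c + t • v) v t := by
    simpa using ((hasDerivAt_id t).smul_const v).const_add c
  have h2 := (hf (c + t • v)).hasFDerivAt.comp_hasDerivAt t h1
  have h3 : ∑ j, v j * pderiv1 j f (c + t • v) = fderiv ℝ f (c + t • v) v := by
    unfold pderiv1
    have h4 : v = ∑ j, v j • (Pi.single j (1 : ℝ) : Fin p → ℝ) := by
      funext i
      simp [Finset.sum_apply, Pi.single_apply]
    conv_rhs => rw [h4, map_sum]
    simp only [map_smul, smul_eq_mul, ← h4]
  rw [h3]
  exact h2

lemma taylor_bound {p : ℕ} (β M : ℝ) (hβ : 0 < β) (hM : 0 ≤ M) (c : Fin p → ℝ) (hc : c ∈ cube p)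
    (r : ℕ) : ∀ (f : (Fin p → ℝ) → ℝ), ContDiff ℝ (r : WithTop ℕ∞) f →
    (∀ s : Fin p → ℕ, degN s = r → ∀ x ∈ cube p, |mderiv s f x - mderiv s f c| ≤ M * ‖x - c‖ ^ β) →
    ∀ v : Fin p → ℝ, c + v ∈ cube p → |f (c + v) - tay r f c v| ≤ p ^ r * M * ‖v‖ ^ (β + r) := by
  induction r with
  | zero =>
    intro f hf h v hv
    have h1 := h 0 (by simp [degN]) _ hv
    have h2 : idx p 0 = {0} := by
      ext s
      rw [mem_idx, Finset.mem_singleton]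
      simp [degN, funext_iff]
    simp only [mderiv_zero] at h1
    simpa [tay, h2, mderiv_zero, fac, vpow] using h1
  | succ r ih =>
    intro f hf h v hv
    have hdiff : Differentiable ℝ f := hf.differentiable (by norm_cast)
    have hR : ∀ t ∈ Set.Icc (0:ℝ) 1, HasDerivWithinAt
        (fun t : ℝ => f (c + t • v) - tay (r + 1) f c (t • v))
        (∑ j, v j * pderiv1 j f (c + t • v) - ∑ j, v j * tay r (pderiv1 j f) c (t • v))
        (Set.Icc (0:ℝ) 1) t := fun t _ =>
      ((line_deriv f hdiff c v t).sub (tay_deriv r f hf c v t)).hasDerivWithinAt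
    have hb : ∀ t ∈ Set.Ico (0:ℝ) 1,
        ‖∑ j, v j * pderiv1 j f (c + t • v) - ∑ j, v j * tay r (pderiv1 j f) c (t • v)‖
          ≤ p ^ (r + 1) * M * ‖v‖ ^ (β + (r + 1 : ℕ)) := by
      intro t ht
      have hcv : c + t • v ∈ cube p := by
        intro j
        have h1 := hc j
        have h2 := hv j
        simp only [Pi.add_apply, Pi.smul_apply, smul_eq_mul] at h2 ⊢
        constructor <;> nlinarith [ht.1, ht.2]
      rw [← Finset.sum_sub_distrib]
      have hj : ∀ j ∈ (Finset.univ : Finset (Fin p)),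
          ‖v j * pderiv1 j f (c + t • v) - v j * tay r (pderiv1 j f) c (t • v)‖
            ≤ p ^ r * M * ‖v‖ ^ (β + (r + 1 : ℕ)) := by
        intro j _
        have := ih (pderiv1 j f) (pderiv1_contDiff j r f hf) (by
          intro s hs x hx
          rw [← mderiv_succ j s f (by rw [hs]; exact hf)]
          exact h _ (by rw [degN_add, degN_single, hs]) x hx) (t • v) hcv
        rw [← mul_sub, norm_mul, Real.norm_eq_abs (_ - _)]
        have hvj : ‖v j‖ ≤ ‖v‖ := norm_le_pi_norm v j
        have ht' : ‖t • v‖ ≤ ‖v‖ := by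
          rw [norm_smul, Real.norm_eq_abs, abs_of_nonneg ht.1]
          nlinarith [norm_nonneg v, ht.2]
        have h3 : ‖t • v‖ ^ (β + r) ≤ ‖v‖ ^ (β + r) :=
          Real.rpow_le_rpow (norm_nonneg _) ht' (by positivity)
        have h4 : ‖v‖ ^ (β + (r + 1 : ℕ)) = ‖v‖ * ‖v‖ ^ (β + r) := by
          push_cast
          rw [← add_assoc, Real.rpow_add_one' (norm_nonneg _) (by positivity)]
          ring
        rw [h4]
        calc ‖v j‖ * |pderiv1 j f (c + t • v) - tay r (pderiv1 j f) c (t • v)|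
            ≤ ‖v‖ * (p ^ r * M * ‖v‖ ^ (β + r)) := by
              apply mul_le_mul hvj _ (abs_nonneg _) (norm_nonneg _)
              exact this.trans (by gcongr)
          _ = _ := by ring
      refine (norm_sum_le_of_le _ hj).trans ?_
      simp
      apply le_of_eq
      ring
    have := norm_image_sub_le_of_norm_deriv_le_segment_01' hR hb
    have h0 : tay (r + 1) f c 0 = f c := by
      unfold tay
      rw [Finset.sum_eq_single 0]
      · simp [mderiv_zero, fac, vpow]
      · intro s _ hs
        have : ∃ j, s j ≠ 0 := by
          by_contra hcon
          push Not at hcon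
          exact hs (funext hcon)
        obtain ⟨j, hj⟩ := this
        have : vpow (0 : Fin p → ℝ) s = 0 := Finset.prod_eq_zero (Finset.mem_univ j) (by simp [hj])
        simp [this]
      · intro h; exact absurd ((mem_idx _).2 (by simp [degN])) h
    simpa [h0] using this

lemma tay_eq {p m : ℕ} (r : ℕ) (hr : r ≤ m) (f : (Fin p → ℝ) → ℝ) (c v : Fin p → ℝ) :
    tay r f c v = ∑ s ∈ mIdx p m, (if deg s ≤ r then
      mderiv (fun j => (s j : ℕ)) f c / ∏ j, (Nat.factorial (s j : ℕ) : ℝ) else 0)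
        * ∏ j, v j ^ (s j : ℕ) := by
  simp only [ite_mul, zero_mul]
  rw [← Finset.sum_filter]
  symm
  unfold tay
  refine Finset.sum_bij (fun s _ => fun j => (s j : ℕ)) ?_ ?_ ?_ ?_
  · intro s hs
    rw [mem_idx]
    exact (Finset.mem_filter.1 hs).2
  · intro a _ b _ h
    funext j
    exact Fin.ext (congrFun h j)
  · intro s hs
    rw [mem_idx] at hs
    have hle : ∀ j, s j < m + 1 := by
      intro j
      have : s j ≤ degN s := Finset.single_le_sum (f := s) (fun _ _ => Nat.zero_le _) (Finset.mem_univ j)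
      omega
    refine ⟨fun j => ⟨s j, hle j⟩, ?_, rfl⟩
    exact Finset.mem_filter.2 ⟨Finset.mem_filter.2 ⟨Finset.mem_univ _, hs.trans hr⟩, hs⟩
  · intro s _
    rfl

lemma hOrder_lt {α : ℝ} (hα : 0 < α) : (hOrder α : ℝ) < α := by
  unfold hOrder
  rcases le_or_gt α 1 with h | h
  · rw [Nat.ceil_eq_zero.2 (by linarith)]; simpa
  · have := Nat.ceil_lt_add_one (a := α - 1) (by linarith)
    linarith

lemma le_hOrder (α : ℝ) : α ≤ hOrder α + 1 := by
  have := Nat.le_ceil (α - 1)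
  unfold hOrder
  linarith

lemma eucNorm_le {p : ℕ} (x : Fin p → ℝ) : eucNorm x ≤ p * ‖x‖ := by
  unfold eucNorm
  apply Real.sqrt_le_iff.2
  refine ⟨by positivity, ?_⟩
  have h1 : ∀ j ∈ (Finset.univ : Finset (Fin p)), x j ^ 2 ≤ ‖x‖ ^ 2 := by
    intro j _
    rw [← sq_abs]
    have := norm_le_pi_norm x j
    rw [Real.norm_eq_abs] at this
    gcongr
  refine (Finset.sum_le_sum h1).trans ?_
  simp
  rw [mul_pow]
  have : (p : ℝ) ≤ p ^ 2 := by exact_mod_cast Nat.le_self_pow (by norm_num) p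
  gcongr

lemma holder_taylor {p : ℕ} {α B : ℝ} (hα : 0 < α) (f : (Fin p → ℝ) → ℝ)
    (hf : IsHolder p α B f) (c : Fin p → ℝ) (hc : c ∈ cube p) (x : Fin p → ℝ) (hx : x ∈ cube p) :
    |f x - tay (hOrder α) f c (x - c)| ≤
      p ^ (hOrder α) * (B * p ^ (α - hOrder α)) * ‖x - c‖ ^ α := by
  obtain ⟨hcd, B₁, B₂, hB1, hB2, hBB, -, hH⟩ := hf
  have hβ : 0 < α - hOrder α := sub_pos.2 (hOrder_lt hα)
  have := taylor_bound (α - hOrder α) (B * p ^ (α - hOrder α)) hβ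
    (mul_nonneg (by linarith) (by positivity)) c hc (hOrder α) f (by exact_mod_cast hcd) (by
      intro s hs y hy
      by_cases hyc : y = c
      · subst hyc; simp; rw [Real.zero_rpow hβ.ne']; simp
      · refine (hH s hs y hy c hc hyc).trans ?_
        rw [hs, mul_assoc, ← Real.mul_rpow (by positivity) (by positivity)]
        have h0 : 0 ≤ eucNorm (y - c) := Real.sqrt_nonneg _
        have := eucNorm_le (y - c)
        have h2 : eucNorm (y - c) ^ (α - hOrder α) ≤ (p * ‖y - c‖) ^ (α - hOrder α) :=
          Real.rpow_le_rpow h0 this hβ.le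
        apply mul_le_mul (by linarith) h2 (by positivity) (by linarith)) (x - c) (by simpa using hx)
  simpa using this

lemma bracket {p m : ℕ} {α B : ℝ} (hα : 0 < α) (hB : 0 < B) (hm : α ≤ (m : ℝ)) (A : ℝ) (hA : 0 < A)
    (f : (Fin p → ℝ) → ℝ) (hf : IsHolder p α B f) (ε : ℝ) (hε : 0 < ε) (δ : ℝ)
    (hδ0 : 0 < δ) (hδ1 : δ ≤ 1) (hδ : δ ^ α ≤ ε)
    (c : Fin p → ℝ) (hc : c ∈ cube p) (x : Fin p → ℝ) (hx : x ∈ cube p) (hxc : ‖x - c‖ ≤ A * δ)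
    (ξ : (Fin p → Fin (m + 1)) → ℝ) (hξ : ∀ s ∈ mIdx p m, |ξ s| ≤ B)
    (hξ' : ∀ s ∈ mIdx p m, deg s ≤ hOrder α →
      |ξ s - mderiv (fun j => (s j : ℕ)) f c / ∏ j, (Nat.factorial (s j : ℕ) : ℝ)| ≤ ε) :
    |∑ s ∈ mIdx p m, ξ s * ∏ j, (x j - c j) ^ (s j : ℕ) - f x| ≤
      ((mIdx p m).card * (1 + B * A ^ (hOrder α + 1)) +
        p ^ (hOrder α) * (B * p ^ (α - hOrder α)) * A ^ α) * ε := by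
  have hr : hOrder α ≤ m := by
    have := (hOrder_lt hα).trans_le hm
    exact_mod_cast this.le
  have ht := holder_taylor hα f hf c hc x hx
  rw [tay_eq (m := m) _ hr] at ht
  simp only [Pi.sub_apply] at ht
  have hx1 : ∀ j, |x j - c j| ≤ 1 := by
    intro j
    have h1 := hx j
    have h2 := hc j
    rw [abs_le]; constructor <;> linarith
  have hx2 : ∀ j, |x j - c j| ≤ ‖x - c‖ := fun j => norm_le_pi_norm (x - c) j
  have hx3 : ‖x - c‖ ≤ 1 := (pi_norm_le_iff_of_nonneg zero_le_one).2 hx1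
  have hmono : ∀ s : Fin p → Fin (m + 1), |∏ j, (x j - c j) ^ (s j : ℕ)| ≤ ‖x - c‖ ^ deg s := by
    intro s
    rw [Finset.abs_prod, deg, ← Finset.prod_pow_eq_pow_sum]
    apply Finset.prod_le_prod
    · intros; positivity
    · intro j _
      rw [abs_pow]
      exact pow_le_pow_left₀ (abs_nonneg _) (hx2 j) _
  have hδr : δ ^ (hOrder α + 1) ≤ ε := by
    refine le_trans ?_ hδ
    rw [← Real.rpow_natCast]
    apply Real.rpow_le_rpow_of_exponent_ge hδ0 hδ1
    push_cast
    exact le_hOrder α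
  have hterm : ∀ s ∈ mIdx p m, |(ξ s - (if deg s ≤ hOrder α then
      mderiv (fun j => (s j : ℕ)) f c / ∏ j, (Nat.factorial (s j : ℕ) : ℝ) else 0))
        * ∏ j, (x j - c j) ^ (s j : ℕ)| ≤ (1 + B * A ^ (hOrder α + 1)) * ε := by
    intro s hs
    rw [abs_mul]
    have hp1 : 0 < B * A ^ (hOrder α + 1) := by positivity
    split_ifs with hd
    · have h1 := hξ' s hs hd
      have h2 : |∏ j, (x j - c j) ^ (s j : ℕ)| ≤ 1 :=
        (hmono s).trans (pow_le_one₀ (norm_nonneg _) hx3)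
      calc _ ≤ ε * 1 := mul_le_mul h1 h2 (abs_nonneg _) hε.le
        _ ≤ _ := by nlinarith
    · have h1 := hξ s hs
      have h2 : |∏ j, (x j - c j) ^ (s j : ℕ)| ≤ A ^ (hOrder α + 1) * ε := by
        calc _ ≤ ‖x - c‖ ^ deg s := hmono s
          _ ≤ ‖x - c‖ ^ (hOrder α + 1) := pow_le_pow_of_le_one (norm_nonneg _) hx3 (by omega)
          _ ≤ (A * δ) ^ (hOrder α + 1) := pow_le_pow_left₀ (norm_nonneg _) hxc _
          _ = A ^ (hOrder α + 1) * δ ^ (hOrder α + 1) := mul_pow _ _ _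
          _ ≤ _ := by gcongr
      rw [sub_zero]
      calc _ ≤ B * (A ^ (hOrder α + 1) * ε) := mul_le_mul h1 h2 (abs_nonneg _) hB.le
        _ ≤ _ := by nlinarith
  have hsum := (Finset.abs_sum_le_sum_abs _ _).trans (Finset.sum_le_sum hterm)
  rw [Finset.sum_const, nsmul_eq_mul] at hsum
  simp only [sub_mul] at hsum
  rw [Finset.sum_sub_distrib] at hsum
  have hxα : ‖x - c‖ ^ α ≤ A ^ α * ε := by
    calc _ ≤ (A * δ) ^ α := Real.rpow_le_rpow (norm_nonneg _) hxc hα.le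
      _ = A ^ α * δ ^ α := Real.mul_rpow hA.le hδ0.le
      _ ≤ _ := by gcongr
  have ht2 : p ^ (hOrder α) * (B * p ^ (α - hOrder α)) * ‖x - c‖ ^ α ≤
      p ^ (hOrder α) * (B * p ^ (α - hOrder α)) * (A ^ α * ε) := by gcongr
  have ht3 := ht.trans ht2
  rw [abs_le] at hsum ht3 ⊢
  constructor <;> nlinarith [hsum.1, hsum.2, ht3.1, ht3.2]

lemma exists_block {K : ℕ} (hK : 0 < K) (y : ℝ) (h0 : 0 ≤ y) (h1 : y ≤ 1) :
    ∃ k : Fin K, ((k : ℕ) : ℝ) / K ≤ y ∧ y ≤ (((k : ℕ) : ℝ) + 1) / K := by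
  have hK' : (0 : ℝ) < K := by exact_mod_cast hK
  by_cases hy : y = 1
  · refine ⟨⟨K - 1, by omega⟩, ?_⟩
    subst hy
    have : ((K - 1 : ℕ) : ℝ) = K - 1 := by rw [Nat.cast_sub hK]; simp
    simp only [this]
    constructor
    · rw [div_le_one hK']; linarith
    · rw [le_div_iff₀ hK']; linarith
  · have hy1 : y < 1 := lt_of_le_of_ne h1 hy
    refine ⟨⟨⌊y * K⌋₊, ?_⟩, ?_, ?_⟩
    · rw [Nat.floor_lt (by positivity)]; nlinarith
    · rw [div_le_iff₀ hK']; exact Nat.floor_le (by positivity)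
    · rw [le_div_iff₀ hK']; exact (Nat.lt_floor_add_one _).le

lemma center_mem {p K : ℕ} (hK : 0 < K) (k : Fin p → Fin K) : center K k ∈ cube p := by
  intro j
  have hK' : (0 : ℝ) < K := by exact_mod_cast hK
  have hk : ((k j : ℕ) : ℝ) + 1 ≤ K := by exact_mod_cast (k j).2
  unfold center
  constructor
  · positivity
  · rw [div_le_one (by positivity)]; linarith

lemma weight_sum {p K : ℕ} (hK : 0 < K) (φ : (Fin p → ℝ) → ℝ) (hφ : IsBoxedKernel φ)
    (hφpos : ∀ u : Fin p → ℝ, ‖u‖ < 1 → 0 < φ u) (h : ℝ) (hh : 1 < K * h)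
    (μ : (Fin p → Fin K) → Fin p → ℝ) (hμ : ∀ k, μ k ∈ block K k) (x : Fin p → ℝ)
    (hx : x ∈ cube p) : ∑ k, weight φ K h μ k x = 1 := by
  have hK' : (0 : ℝ) < K := by exact_mod_cast hK
  have hh0 : 0 < h := by
    by_contra hc
    push Not at hc
    nlinarith
  unfold weight
  rw [← Finset.sum_div]
  apply div_self
  choose k hk using fun j => exists_block hK (x j) (hx j).1 (hx j).2
  apply ne_of_gt
  apply Finset.sum_pos' (fun l _ => (hφ.2.1 _).1)
  refine ⟨k, Finset.mem_univ _, hφpos _ ?_⟩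
  rw [pi_norm_lt_iff zero_lt_one]
  intro j
  have h1 := hk j
  have h2 := hμ k j
  rw [add_div] at h1 h2
  rw [Real.norm_eq_abs, abs_div, abs_of_pos hh0, div_lt_one hh0]
  have h3 : 1 / (K : ℝ) < h := by rw [div_lt_iff₀ hK']; linarith
  rw [abs_lt]
  constructor <;> linarith

lemma weight_nonneg {p K : ℕ} (φ : (Fin p → ℝ) → ℝ) (hφ : IsBoxedKernel φ) (h : ℝ)
    (μ : (Fin p → Fin K) → Fin p → ℝ) (k) (x : Fin p → ℝ) : 0 ≤ weight φ K h μ k x :=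
  div_nonneg (hφ.2.1 _).1 (Finset.sum_nonneg fun l _ => (hφ.2.1 _).1)

lemma weight_supp {p K : ℕ} (hK : 0 < K) (φ : (Fin p → ℝ) → ℝ) (hφ : IsBoxedKernel φ)
    (h : ℝ) (hh0 : 0 < h) (H : ℝ) (hH : K * h ≤ H)
    (μ : (Fin p → Fin K) → Fin p → ℝ) (hμ : ∀ k, μ k ∈ block K k) (k) (x : Fin p → ℝ)
    (hw : weight φ K h μ k x ≠ 0) : ‖x - center K k‖ ≤ (H + 1) * (1 / K) := by
  have hK' : (0 : ℝ) < K := by exact_mod_cast hK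
  have hu : ‖(fun j => (x j - μ k j) / h)‖ ≤ 1 := by
    by_contra hc
    push Not at hc
    apply hw
    unfold weight
    rw [hφ.2.2.1 _ hc, zero_div]
  have hH0 : 0 < H := lt_of_lt_of_le (by positivity) hH
  rw [pi_norm_le_iff_of_nonneg (by positivity)]
  intro j
  have h1 := (norm_le_pi_norm _ j).trans hu
  rw [Real.norm_eq_abs, abs_div, abs_of_pos hh0, div_le_one hh0, abs_le] at h1
  have h2 := hμ k j
  rw [add_div] at h2
  have h3 : h ≤ H * (1 / K) := by rw [mul_one_div, le_div_iff₀ hK']; linarith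
  have h4 : center K k j = ((k j : ℕ) : ℝ) / K + 1 / K / 2 := by
    unfold center; field_simp
  have h5 : 0 < 1 / (K : ℝ) := by positivity
  rw [Pi.sub_apply, Real.norm_eq_abs, h4, abs_le]
  constructor <;> linarith

lemma cube_eq (p : ℕ) : cube p = Set.Icc 0 1 := by
  ext x
  simp only [cube, Set.mem_setOf_eq, Set.mem_Icc, Pi.le_def, Pi.zero_apply, Pi.one_apply]
  exact forall_and

/-- Approximation lemma: if `K ≥ ε^{-1/α}` and the coefficients of a kernel
mixture of polynomials are within `ε` of the scaled Taylor coefficients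
`D^s f₀(μ_k^⋆)/s!` of an α-Hölder `f₀` (envelope `B`), then the squared-`L₂(P_x)`
distance is at most `C₁ ε²`, where `C₁` depends only on `α, B, p, m, h̲, h̄, p̄`. -/
theorem statement5 {p m : ℕ} (hp : 0 < p) (α B : ℝ) (hα : 0 < α) (hB : 0 < B)
    (hm : α ≤ (m : ℝ)) (hmin hmax : ℝ) (hh1 : 1 < hmin) (hh2 : hmin < hmax)
    (φ : (Fin p → ℝ) → ℝ) (hφ : IsBoxedKernel φ)
    (hφpos : ∀ u : Fin p → ℝ, ‖u‖ < 1 → 0 < φ u)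
    (px : (Fin p → ℝ) → ℝ) (hpxm : Measurable px) (pmax : ℝ)
    (hpx : ∀ x ∈ cube p, 0 ≤ px x ∧ px x ≤ pmax) :
    ∃ C₁ : ℝ, 0 < C₁ ∧ ∃ ε₀ : ℝ, 0 < ε₀ ∧
      ∀ f₀ : (Fin p → ℝ) → ℝ, IsHolder p α B f₀ →
      ∀ ε : ℝ, 0 < ε → ε < ε₀ →
      ∀ K : ℕ, ε ^ (-1 / α) ≤ (K : ℝ) →
      ∀ h : ℝ, (K : ℝ) * h ∈ Set.Icc hmin hmax →
      ∀ μ : (Fin p → Fin K) → Fin p → ℝ, (∀ k, μ k ∈ block K k) →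
      ∀ ξ : (Fin p → Fin K) → (Fin p → Fin (m + 1)) → ℝ,
        (∀ k, ∀ s ∈ mIdx p m, |ξ k s| ≤ B) →
        (∀ k, ∀ s ∈ mIdx p m, deg s ≤ hOrder α →
          |ξ k s - mderiv (fun j => (s j : ℕ)) f₀ (center K k) /
              ∏ j, (Nat.factorial (s j : ℕ) : ℝ)| ≤ ε) →
        ∫ x in cube p, (kmpFun φ K m h μ ξ x - f₀ x) ^ 2 * px x < C₁ * ε ^ 2 := by
  set A : ℝ := hmax + 1 with hAdef
  have hA : 0 < A := by linarith
  set C : ℝ := (mIdx p m).card * (1 + B * A ^ (hOrder α + 1)) +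
        p ^ (hOrder α) * (B * p ^ (α - hOrder α)) * A ^ α with hC
  have hC0 : 0 ≤ C := by positivity
  have hpm : 0 ≤ pmax := by
    have := hpx 0 (by intro j; simp)
    linarith
  refine ⟨C ^ 2 * pmax + 1, by positivity, 1, one_pos, ?_⟩
  intro f₀ hf ε hε hε1 K hK h hKh μ hμ ξ hξ hξ'
  have hK' : (0 : ℝ) < K := lt_of_lt_of_le (by positivity) hK
  have hKn : 0 < K := by exact_mod_cast hK'
  have hh0 : 0 < h := by
    by_contra hc
    push Not at hc
    have := hKh.1
    nlinarith
  have hδ : (1 / (K : ℝ)) ^ α ≤ ε := by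
    have h1 : 1 / (K : ℝ) ≤ ε ^ (1 / α) := by
      rw [neg_div, Real.rpow_neg hε.le] at hK
      rw [one_div]
      exact inv_le_of_inv_le₀ (by positivity) hK
    calc (1 / (K : ℝ)) ^ α ≤ (ε ^ (1 / α)) ^ α := Real.rpow_le_rpow (by positivity) h1 hα.le
      _ = ε := by rw [← Real.rpow_mul hε.le, one_div, inv_mul_cancel₀ hα.ne', Real.rpow_one]
  have hδ1 : 1 / (K : ℝ) ≤ 1 := by
    rw [div_le_one hK']; exact_mod_cast hKn
  have hpt : ∀ x ∈ cube p, |kmpFun φ K m h μ ξ x - f₀ x| ≤ C * ε := by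
    intro x hx
    have hs := weight_sum hKn φ hφ hφpos h (lt_of_lt_of_le hh1 hKh.1) μ hμ x hx
    have e : kmpFun φ K m h μ ξ x - f₀ x = ∑ k, weight φ K h μ k x *
        (∑ s ∈ mIdx p m, ξ k s * ∏ j, (x j - center K k j) ^ (s j : ℕ) - f₀ x) := by
      simp only [mul_sub]
      rw [Finset.sum_sub_distrib, ← Finset.sum_mul, hs, one_mul]
      congr 1
      unfold kmpFun
      apply Finset.sum_congr rfl
      intro k _
      rw [Finset.mul_sum]
      apply Finset.sum_congr rfl
      intro s _
      unfold mono
      ring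
    rw [e]
    refine (Finset.abs_sum_le_sum_abs _ _).trans ?_
    calc _ ≤ ∑ k, weight φ K h μ k x * (C * ε) := by
          apply Finset.sum_le_sum
          intro k _
          have hw := weight_nonneg φ hφ h μ k x
          rw [abs_mul, abs_of_nonneg hw]
          by_cases hw0 : weight φ K h μ k x = 0
          · simp [hw0]
          · apply mul_le_mul_of_nonneg_left _ hw
            exact bracket hα hB hm A hA f₀ hf ε hε (1 / K) (by positivity) hδ1 hδ (center K k)
              (center_mem hKn k) x hx (weight_supp hKn φ hφ h hh0 hmax hKh.2 μ hμ k x hw0)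
              (ξ k) (hξ k) (hξ' k)
      _ = C * ε := by rw [← Finset.sum_mul, hs, one_mul]
  have hvol : volume (cube p) = 1 := by
    rw [cube_eq, Real.volume_Icc_pi]; simp
  have hb : ∀ x ∈ cube p, ‖(kmpFun φ K m h μ ξ x - f₀ x) ^ 2 * px x‖ ≤ (C * ε) ^ 2 * pmax := by
    intro x hx
    have h1 := hpx x hx
    rw [Real.norm_eq_abs, abs_mul, abs_of_nonneg h1.1, abs_pow]
    exact mul_le_mul (pow_le_pow_left₀ (abs_nonneg _) (hpt x hx) 2) h1.2 h1.1 (by positivity)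
  have := norm_setIntegral_le_of_norm_le_const (μ := volume) (by rw [hvol]; simp) hb
  rw [measureReal_def, hvol] at this
  simp only [ENNReal.toReal_one, mul_one] at this
  have h2 := (le_abs_self _).trans this
  refine h2.trans_lt ?_
  nlinarith [pow_pos hε 2]

end KMP
end
end

section
/- (Metric entropy bound for the kernel mixture of polynomials class) Fix p, m ∈ ℕ₊, B > 0, and 1 < h̲ < h̄ < ∞. There exist constants c₂ > 0 and ε₀ > 0 (depending only on p, m, B, h̲, h̄) such that for every K ∈ ℕ₊ and every ε ∈ (0, ε₀), there is a finite set G of bounded functions on [0,1]^p with cardinality at most exp(c₂ K^p log(1/ε)) such that for every f ∈ F_K there exists g ∈ G with sup_{x ∈ [0,1]^p} |f(x) − g(x)| ≤ ε; equivalently, the ε-covering number of (F_K, ‖·‖_∞) satisfies log N(ε, F_K, ‖·‖_∞) ≤ c₂ K^p log(1/ε). -/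
open MeasureTheory Filter Real Matrix
open scoped ENNReal NNReal BigOperators Classical

noncomputable section

namespace KMP

lemma ratio_aux {ι : Type*} [Fintype ι] (a a' f f' : ι → ℝ) (δ α A β : ℝ) (hδ : 0 < δ)
    (hf : ∀ k, 0 ≤ f k) (hf' : ∀ k, 0 ≤ f' k) (hS : δ ≤ ∑ k, f k) (hS' : δ ≤ ∑ k, f' k)
    (ha : ∀ k, |a k - a' k| ≤ α) (ha' : ∀ k, |a' k| ≤ A) (hA : 0 ≤ A)
    (hβ : ∑ k, |f k - f' k| ≤ β) :
    |∑ k, a k * (f k / ∑ l, f l) - ∑ k, a' k * (f' k / ∑ l, f' l)| ≤ α + 2 * A * β / δ := by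
  set S := ∑ k, f k with hSd
  set S' := ∑ k, f' k with hSd'
  have hSp : 0 < S := lt_of_lt_of_le hδ hS
  have hSp' : 0 < S' := lt_of_lt_of_le hδ hS'
  have hSS : |S' - S| ≤ β := by
    rw [hSd, hSd', ← Finset.sum_sub_distrib]
    refine (Finset.abs_sum_le_sum_abs _ _).trans (le_trans (le_of_eq ?_) hβ)
    exact Finset.sum_congr rfl fun k _ => abs_sub_comm _ _
  have hβ0 : 0 ≤ β := (abs_nonneg _).trans hSS
  have e : ∑ k, a k * (f k / S) - ∑ k, a' k * (f' k / S')
      = ∑ k, (a k - a' k) * (f k / S) + ∑ k, a' k * ((f k - f' k) / S)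
        + ((S' - S) / S) * ∑ k, a' k * (f' k / S') := by
    rw [Finset.mul_sum, ← Finset.sum_sub_distrib, ← Finset.sum_add_distrib,
      ← Finset.sum_add_distrib]
    refine Finset.sum_congr rfl fun k _ => ?_
    field_simp
    ring
  have h1 : |∑ k, (a k - a' k) * (f k / S)| ≤ α := by
    calc _ ≤ ∑ k, |(a k - a' k) * (f k / S)| := Finset.abs_sum_le_sum_abs _ _
      _ ≤ ∑ k, α * (f k / S) := by
        refine Finset.sum_le_sum fun k _ => ?_
        have : 0 ≤ f k / S := div_nonneg (hf k) hSp.le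
        rw [abs_mul, abs_of_nonneg this]
        exact mul_le_mul_of_nonneg_right (ha k) this
      _ = α := by
        rw [← Finset.mul_sum, ← Finset.sum_div, ← hSd, div_self hSp.ne', mul_one]
  have h2 : |∑ k, a' k * ((f k - f' k) / S)| ≤ A * β / δ := by
    calc _ ≤ ∑ k, |a' k * ((f k - f' k) / S)| := Finset.abs_sum_le_sum_abs _ _
      _ ≤ ∑ k, A * (|f k - f' k| / δ) := by
        refine Finset.sum_le_sum fun k _ => ?_
        rw [abs_mul, abs_div, abs_of_pos hSp]
        have := ha' k
        gcongr
      _ = A * (∑ k, |f k - f' k|) / δ := by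
        rw [← Finset.mul_sum, ← Finset.sum_div, mul_div_assoc]
      _ ≤ _ := by gcongr
  have h3 : |∑ k, a' k * (f' k / S')| ≤ A := by
    calc _ ≤ ∑ k, |a' k * (f' k / S')| := Finset.abs_sum_le_sum_abs _ _
      _ ≤ ∑ k, A * (f' k / S') := by
        refine Finset.sum_le_sum fun k _ => ?_
        have : 0 ≤ f' k / S' := div_nonneg (hf' k) hSp'.le
        rw [abs_mul, abs_of_nonneg this]
        exact mul_le_mul_of_nonneg_right (ha' k) this
      _ = A := by
        rw [← Finset.mul_sum, ← Finset.sum_div, ← hSd', div_self hSp'.ne', mul_one]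
  have h4 : |((S' - S) / S) * ∑ k, a' k * (f' k / S')| ≤ A * β / δ := by
    rw [abs_mul, abs_div, abs_of_pos hSp]
    calc |S' - S| / S * _ ≤ β / δ * A := by gcongr
      _ = _ := by ring
  rw [e]
  calc _ ≤ α + A * β / δ + A * β / δ :=
        (abs_add_le _ _).trans (add_le_add ((abs_add_le _ _).trans (add_le_add h1 h2)) h4)
    _ = _ := by ring

lemma card_near {K : ℕ} (y R : ℝ) (hR : 0 ≤ R) :
    (((Finset.univ : Finset (Fin K)).filter fun k : Fin K => |y - ((k : ℕ) : ℝ)| ≤ R).card : ℝ)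
      ≤ 2 * R + 1 := by
  have h1 : ((Finset.univ : Finset (Fin K)).filter fun k : Fin K => |y - ((k : ℕ) : ℝ)| ≤ R).card
      ≤ (Finset.Icc ⌈y - R⌉ ⌊y + R⌋).card := by
    refine Finset.card_le_card_of_injOn (fun k => ((k : ℕ) : ℤ)) ?_ ?_
    · intro k hk
      simp only [Finset.coe_filter, Finset.mem_univ, true_and, Set.mem_ofPred_eq, abs_le] at hk
      simp only [Finset.coe_Icc, Set.mem_Icc, Int.ceil_le, Int.le_floor, Int.cast_natCast]
      constructor <;> linarith [hk.1, hk.2]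
    · intro k _ l _ hkl
      simpa [Fin.ext_iff] using hkl
  have h2 : ((Finset.Icc ⌈y - R⌉ ⌊y + R⌋).card : ℝ) ≤ 2 * R + 1 := by
    rw [Int.card_Icc]
    have a1 := Int.le_ceil (y - R)
    have a2 := Int.floor_le (y + R)
    rcases le_total 0 (⌊y + R⌋ + 1 - ⌈y - R⌉) with h | h
    · have : (((⌊y + R⌋ + 1 - ⌈y - R⌉).toNat : ℤ) : ℝ) = ((⌊y + R⌋ + 1 - ⌈y - R⌉ : ℤ) : ℝ) := by
        rw [Int.toNat_of_nonneg h]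
      rw [Int.cast_natCast] at this
      rw [this]; push_cast; linarith
    · rw [Int.toNat_of_nonpos h]; push_cast; linarith
  exact le_trans (by exact_mod_cast h1) h2

lemma card_near_pi {p K : ℕ} (y : Fin p → ℝ) (R : ℝ) (hR : 0 ≤ R) :
    (((Finset.univ : Finset (Fin p → Fin K)).filter
      fun k : Fin p → Fin K => ∀ j, |y j - ((k j : ℕ) : ℝ)| ≤ R).card : ℝ) ≤ (2 * R + 1) ^ p := by
  have : ((Finset.univ : Finset (Fin p → Fin K)).filter
      fun k : Fin p → Fin K => ∀ j, |y j - ((k j : ℕ) : ℝ)| ≤ R) = Fintype.piFinset fun j =>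
        (Finset.univ : Finset (Fin K)).filter fun k : Fin K => |y j - ((k : ℕ) : ℝ)| ≤ R := by
    ext k; simp [Fintype.mem_piFinset]
  rw [this, Fintype.card_piFinset]
  push_cast
  calc _ ≤ ∏ _j : Fin p, (2 * R + 1) :=
        Finset.prod_le_prod (fun _ _ => Nat.cast_nonneg _) fun j _ => card_near (y j) R hR
    _ = _ := by simp

lemma exists_cell {K : ℕ} (hK : 1 ≤ K) (t : ℝ) (h0 : 0 ≤ t) (h1 : t ≤ 1) :
    ∃ k : Fin K, ((k : ℕ) : ℝ) ≤ K * t ∧ K * t ≤ ((k : ℕ) : ℝ) + 1 := by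
  have hK' : (1 : ℝ) ≤ K := by exact_mod_cast hK
  rcases lt_or_eq_of_le h1 with h | h
  · have hlt : (K : ℝ) * t < K := by nlinarith
    have hn : 0 ≤ (K : ℝ) * t := by positivity
    exact ⟨⟨⌊(K : ℝ) * t⌋₊, (Nat.floor_lt hn).2 hlt⟩, Nat.floor_le hn, (Nat.lt_floor_add_one _).le⟩
  · refine ⟨⟨K - 1, by omega⟩, ?_, ?_⟩ <;> subst h <;> simp only [Nat.cast_sub hK] <;> simp

lemma exists_quant {N : ℕ} (hN : 1 ≤ N) (t : ℝ) (h0 : 0 ≤ t) (h1 : t ≤ 1) :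
    ∃ i : Fin (N + 1), |t - ((i : ℕ) : ℝ) / N| ≤ 1 / N := by
  obtain ⟨k, hk1, hk2⟩ := exists_cell hN t h0 h1
  have hN' : (0 : ℝ) < N := by exact_mod_cast hN
  refine ⟨k.castSucc, ?_⟩
  have e : t - ((k.castSucc : ℕ) : ℝ) / N = (N * t - ((k : ℕ) : ℝ)) / N := by
    simp; field_simp
  rw [e, abs_div, abs_of_pos hN']
  gcongr
  rw [abs_le]; constructor <;> linarith

/-- scaled closed-block condition -/
def inCell {p : ℕ} (K : ℕ) (μ : (Fin p → Fin K) → Fin p → ℝ) : Prop :=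
  ∀ k j, ((k j : ℕ) : ℝ) ≤ K * μ k j ∧ K * μ k j ≤ ((k j : ℕ) : ℝ) + 1

section
variable {p : ℕ} {φ : (Fin p → ℝ) → ℝ} {K : ℕ} {hmin hmax : ℝ}

lemma u_eq (hK : 1 ≤ K) (h a b : ℝ) : (a - b) / h = (K * a - K * b) / (K * h) := by
  have : (K : ℝ) ≠ 0 := by positivity
  rw [← mul_sub, mul_div_mul_left _ _ this]

lemma denom_lb (hK : 1 ≤ K) (hh1 : 1 < hmin) (hφ : IsBoxedKernel φ) {h : ℝ}
    (hh : (K : ℝ) * h ∈ Set.Icc hmin hmax) {μ : (Fin p → Fin K) → Fin p → ℝ}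
    (hμ : inCell K μ) {x : Fin p → ℝ} (hx : x ∈ cube p) :
    φ (fun _ => 1 / hmin) ≤ ∑ l : Fin p → Fin K, φ (fun j => (x j - μ l j) / h) := by
  choose k hk using fun j => exists_cell hK (x j) (hx j).1 (hx j).2
  refine le_trans ?_ (Finset.single_le_sum (f := fun l : Fin p → Fin K =>
    φ (fun j => (x j - μ l j) / h)) (fun l _ => (hφ.2.1 _).1) (Finset.mem_univ k))
  apply hφ.2.2.2
  rw [pi_norm_le_iff_of_nonneg (norm_nonneg _)]
  intro j
  refine le_trans ?_ (norm_le_pi_norm (fun _ : Fin p => 1 / hmin) j)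
  rw [u_eq hK, Real.norm_eq_abs, Real.norm_eq_abs, abs_div]
  have hp : 0 < (K : ℝ) * h := by linarith [hh.1]
  rw [abs_of_pos hp, abs_of_pos (by positivity : 0 < 1 / hmin)]
  have := hμ k j
  have := hk j
  have : |K * x j - K * μ k j| ≤ 1 := by rw [abs_le]; constructor <;> linarith
  have := hh.1
  gcongr

lemma far_zero (hK : 1 ≤ K) (hh1 : 1 < hmin) (hφ : IsBoxedKernel φ) {h : ℝ}
    (hh : (K : ℝ) * h ∈ Set.Icc hmin hmax) {μ : (Fin p → Fin K) → Fin p → ℝ}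
    (hμ : inCell K μ) {x : Fin p → ℝ} {k : Fin p → Fin K}
    (hk : ¬ ∀ j, |K * x j - ((k j : ℕ) : ℝ)| ≤ hmax + 1) :
    φ (fun j => (x j - μ k j) / h) = 0 := by
  push Not at hk
  obtain ⟨j, hj⟩ := hk
  apply hφ.2.2.1
  refine lt_of_lt_of_le ?_ (norm_le_pi_norm _ j)
  have hp : 0 < (K : ℝ) * h := by linarith [hh.1]
  rw [u_eq hK, Real.norm_eq_abs, abs_div, abs_of_pos hp, lt_div_iff₀ hp, one_mul]
  have h1 := hμ k j
  have h2 := hh.2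
  have h3 : |K * x j - ((k j : ℕ) : ℝ)| ≤ |K * x j - K * μ k j| + 1 := by
    calc _ = |(K * x j - K * μ k j) + (K * μ k j - ((k j : ℕ) : ℝ))| := by ring_nf
      _ ≤ |K * x j - K * μ k j| + |K * μ k j - ((k j : ℕ) : ℝ)| := abs_add_le _ _
      _ ≤ _ := by
        gcongr
        rw [abs_le]; constructor <;> linarith
  linarith

lemma near_diff (hK : 1 ≤ K) (hh1 : 1 < hmin) (hh2 : hmin < hmax)
    (L : NNReal) (hφL : LipschitzWith L φ)
    {h h' : ℝ} (hh : (K : ℝ) * h ∈ Set.Icc hmin hmax) (hh' : (K : ℝ) * h' ∈ Set.Icc hmin hmax)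
    {μ μ' : (Fin p → Fin K) → Fin p → ℝ} (hμ' : inCell K μ')
    {η : ℝ} (hη : 0 ≤ η) (hd : |(K : ℝ) * h - K * h'| ≤ (hmax - hmin) * η)
    (hμd : ∀ k j, |K * μ k j - K * μ' k j| ≤ η)
    {x : Fin p → ℝ} {k : Fin p → Fin K}
    (hk : ∀ j, |K * x j - ((k j : ℕ) : ℝ)| ≤ hmax + 1) :
    |φ (fun j => (x j - μ k j) / h) - φ (fun j => (x j - μ' k j) / h')|
      ≤ L * ((1 + (hmax + 2) * (hmax - hmin)) * η) := by
  rw [← Real.dist_eq]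
  refine (hφL.dist_le_mul _ _).trans ?_
  gcongr
  have hc : 0 ≤ (1 + (hmax + 2) * (hmax - hmin)) * η := by
    have : 0 ≤ hmax - hmin := by linarith
    have : 0 ≤ hmax + 2 := by linarith
    positivity
  rw [dist_pi_le_iff hc]
  intro j
  rw [u_eq hK h, u_eq hK h', Real.dist_eq]
  set H := (K : ℝ) * h
  set H' := (K : ℝ) * h'
  have hH : 1 ≤ H := by linarith [hh.1]
  have hH' : 1 ≤ H' := by linarith [hh'.1]
  have hHp : 0 < H := by linarith
  have hHp' : 0 < H' := by linarith
  have e : (K * x j - K * μ k j) / H - (K * x j - K * μ' k j) / H'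
      = -(K * μ k j - K * μ' k j) / H - (K * x j - K * μ' k j) * (H - H') / (H * H') := by
    field_simp; ring
  have hx : |K * x j - K * μ' k j| ≤ hmax + 2 := by
    have h1 := hμ' k j
    have h2 := abs_le.1 (hk j)
    rw [abs_le]; constructor <;> linarith
  rw [e]
  have a1 : |-(K * μ k j - K * μ' k j) / H| ≤ η := by
    rw [abs_div, abs_neg, abs_of_pos hHp]
    exact (div_le_self (abs_nonneg _) hH).trans (hμd k j)
  have a2 : |(K * x j - K * μ' k j) * (H - H') / (H * H')| ≤ (hmax + 2) * ((hmax - hmin) * η) := by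
    rw [abs_div, abs_of_pos (mul_pos hHp hHp'), abs_mul]
    refine (div_le_self (by positivity) (by nlinarith)).trans ?_
    exact mul_le_mul hx hd (abs_nonneg _) (by linarith)
  calc _ ≤ _ := abs_sub _ _
    _ ≤ _ := add_le_add a1 a2
    _ = _ := by ring

lemma sum_diff (hK : 1 ≤ K) (hh1 : 1 < hmin) (hh2 : hmin < hmax) (hφ : IsBoxedKernel φ)
    (L : NNReal) (hφL : LipschitzWith L φ)
    {h h' : ℝ} (hh : (K : ℝ) * h ∈ Set.Icc hmin hmax) (hh' : (K : ℝ) * h' ∈ Set.Icc hmin hmax)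
    {μ μ' : (Fin p → Fin K) → Fin p → ℝ} (hμ : inCell K μ) (hμ' : inCell K μ')
    {η : ℝ} (hη : 0 ≤ η) (hd : |(K : ℝ) * h - K * h'| ≤ (hmax - hmin) * η)
    (hμd : ∀ k j, |K * μ k j - K * μ' k j| ≤ η) (x : Fin p → ℝ) :
    ∑ k : Fin p → Fin K, |φ (fun j => (x j - μ k j) / h) - φ (fun j => (x j - μ' k j) / h')|
      ≤ (2 * (hmax + 1) + 1) ^ p * (L * ((1 + (hmax + 2) * (hmax - hmin)) * η)) := by
  rw [← Finset.sum_filter_add_sum_filter_not Finset.univ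
    (fun k : Fin p → Fin K => ∀ j, |K * x j - ((k j : ℕ) : ℝ)| ≤ hmax + 1)]
  rw [Finset.sum_eq_zero (s := Finset.univ.filter fun k : Fin p → Fin K =>
    ¬ ∀ j, |K * x j - ((k j : ℕ) : ℝ)| ≤ hmax + 1), add_zero]
  · have hc : 0 ≤ L * ((1 + (hmax + 2) * (hmax - hmin)) * η) := by
      have : 0 ≤ hmax - hmin := by linarith
      have : 0 ≤ hmax + 2 := by linarith
      positivity
    refine (Finset.sum_le_card_nsmul _ _ _ fun k hk => near_diff hK hh1 hh2 L hφL hh hh' hμ' hη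
      hd hμd (Finset.mem_filter.1 hk).2).trans ?_
    rw [nsmul_eq_mul]
    exact mul_le_mul_of_nonneg_right
      (card_near_pi (fun j => K * x j) (hmax + 1) (by linarith)) hc
  · intro k hk
    have hk := (Finset.mem_filter.1 hk).2
    rw [far_zero hK hh1 hφ hh hμ hk, far_zero hK hh1 hφ hh' hμ' hk]
    simp

lemma mono_le {m : ℕ} (k : Fin p → Fin K) (s : Fin p → Fin (m + 1))
    {x : Fin p → ℝ} (hx : x ∈ cube p) : |mono K m k s x| ≤ 1 := by
  unfold mono
  rw [Finset.abs_prod]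
  refine Finset.prod_le_one (fun _ _ => abs_nonneg _) fun j _ => ?_
  rw [abs_pow]
  refine pow_le_one₀ (abs_nonneg _) ?_
  have hlt : ((k j : ℕ) : ℝ) + 1 ≤ K := by exact_mod_cast (k j).2
  have hk0 : (0 : ℝ) ≤ ((k j : ℕ) : ℝ) := Nat.cast_nonneg _
  have hK : (0 : ℝ) < 2 * K := by linarith
  have c0 : 0 ≤ center K k j := by unfold center; positivity
  have c1 : center K k j ≤ 1 := by unfold center; rw [div_le_one hK]; linarith
  have := hx j
  rw [abs_le]; constructor <;> linarith

lemma card_mIdx (p m : ℕ) : ((mIdx p m).card : ℝ) ≤ ((m : ℝ) + 1) ^ p := by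
  have : (mIdx p m).card ≤ (m + 1) ^ p := by
    refine (Finset.card_filter_le _ _).trans ?_
    simp
  exact_mod_cast this

lemma coef_le {m : ℕ} (k : Fin p → Fin K) (c : (Fin p → Fin (m + 1)) → ℝ) {b : ℝ} (hb : 0 ≤ b)
    (hc : ∀ s ∈ mIdx p m, |c s| ≤ b) {x : Fin p → ℝ} (hx : x ∈ cube p) :
    |∑ s ∈ mIdx p m, c s * mono K m k s x| ≤ ((m : ℝ) + 1) ^ p * b := by
  refine (Finset.abs_sum_le_sum_abs _ _).trans ?_
  refine (Finset.sum_le_card_nsmul _ _ b fun s hs => ?_).trans ?_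
  · rw [abs_mul]
    exact (mul_le_mul (hc s hs) (mono_le k s hx) (abs_nonneg _) hb).trans (by simp)
  · rw [nsmul_eq_mul]
    exact mul_le_mul_of_nonneg_right (card_mIdx p m) hb

lemma kmp_eq (m : ℕ) (h : ℝ) (μ : (Fin p → Fin K) → Fin p → ℝ)
    (ξ : (Fin p → Fin K) → (Fin p → Fin (m + 1)) → ℝ) (x : Fin p → ℝ) :
    kmpFun φ K m h μ ξ x = ∑ k : Fin p → Fin K, (∑ s ∈ mIdx p m, ξ k s * mono K m k s x) *
      (φ (fun j => (x j - μ k j) / h) / ∑ l : Fin p → Fin K, φ (fun j => (x j - μ l j) / h)) := by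
  unfold kmpFun weight
  refine Finset.sum_congr rfl fun k _ => ?_
  rw [Finset.sum_mul]
  refine Finset.sum_congr rfl fun s _ => ?_
  ring

lemma kmp_stable {m : ℕ} {B : ℝ} (hB : 0 < B) (hK : 1 ≤ K) (hh1 : 1 < hmin) (hh2 : hmin < hmax)
    (hφ : IsBoxedKernel φ) (hδ : 0 < φ (fun _ => 1 / hmin))
    (L : NNReal) (hφL : LipschitzWith L φ)
    {h h' : ℝ} (hh : (K : ℝ) * h ∈ Set.Icc hmin hmax) (hh' : (K : ℝ) * h' ∈ Set.Icc hmin hmax)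
    {μ μ' : (Fin p → Fin K) → Fin p → ℝ} (hμ : inCell K μ) (hμ' : inCell K μ')
    {η : ℝ} (hη : 0 ≤ η) (hd : |(K : ℝ) * h - K * h'| ≤ (hmax - hmin) * η)
    (hμd : ∀ k j, |K * μ k j - K * μ' k j| ≤ η)
    {ξ ξ' : (Fin p → Fin K) → (Fin p → Fin (m + 1)) → ℝ}
    (hξ' : ∀ k, ∀ s ∈ mIdx p m, |ξ' k s| ≤ B)
    (hξd : ∀ k, ∀ s ∈ mIdx p m, |ξ k s - ξ' k s| ≤ 2 * B * η)
    {x : Fin p → ℝ} (hx : x ∈ cube p) :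
    |kmpFun φ K m h μ ξ x - kmpFun φ K m h' μ' ξ' x| ≤
      (((m : ℝ) + 1) ^ p * (2 * B) + 2 * (((m : ℝ) + 1) ^ p * B) *
        ((2 * (hmax + 1) + 1) ^ p * (L * (1 + (hmax + 2) * (hmax - hmin))))
        / φ (fun _ => 1 / hmin)) * η := by
  rw [kmp_eq, kmp_eq]
  refine (ratio_aux _ _ _ _ _ (((m : ℝ) + 1) ^ p * (2 * B * η)) (((m : ℝ) + 1) ^ p * B) _ hδ
    (fun k => (hφ.2.1 _).1) (fun k => (hφ.2.1 _).1) (denom_lb hK hh1 hφ hh hμ hx)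
    (denom_lb hK hh1 hφ hh' hμ' hx) ?_ ?_ (by positivity)
    (sum_diff hK hh1 hh2 hφ L hφL hh hh' hμ hμ' hη hd hμd x)).trans (le_of_eq (by ring))
  · intro k
    rw [← Finset.sum_sub_distrib]
    have : ∀ s, ξ k s * mono K m k s x - ξ' k s * mono K m k s x
        = (ξ k s - ξ' k s) * mono K m k s x := fun s => by ring
    simp only [this]
    exact coef_le k _ (by positivity) (hξd k) hx
  · intro k
    exact coef_le k _ hB.le (hξ' k) hx

end

/-- Metric entropy bound: the class `F_K` of kernel mixtures of polynomials
(with a fixed Lipschitz boxed kernel) admits, for every small `ε`, a sup-norm `ε`-net of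
cardinality at most `exp(c₂ K^p log(1/ε))`. -/
theorem statement6 {p m : ℕ} (hp : 0 < p) (hm : 0 < m) (B : ℝ) (hB : 0 < B)
    (hmin hmax : ℝ) (hh1 : 1 < hmin) (hh2 : hmin < hmax)
    (φ : (Fin p → ℝ) → ℝ) (hφ : IsBoxedKernel φ)
    (hφpos : ∀ u : Fin p → ℝ, ‖u‖ < 1 → 0 < φ u)
    (L : NNReal) (hφL : LipschitzWith L φ) :
    ∃ c₂ : ℝ, 0 < c₂ ∧ ∃ ε₀ : ℝ, 0 < ε₀ ∧
      ∀ K : ℕ, 1 ≤ K → ∀ ε : ℝ, 0 < ε → ε < ε₀ →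
        ∃ G : Finset ((Fin p → ℝ) → ℝ),
          (G.card : ℝ) ≤ Real.exp (c₂ * (K : ℝ) ^ p * Real.log (1 / ε)) ∧
          ∀ h : ℝ, (K : ℝ) * h ∈ Set.Icc hmin hmax →
          ∀ μ : (Fin p → Fin K) → Fin p → ℝ, (∀ k, μ k ∈ block K k) →
          ∀ ξ : (Fin p → Fin K) → (Fin p → Fin (m + 1)) → ℝ,
            (∀ k, ∀ s ∈ mIdx p m, |ξ k s| ≤ B) →
            ∃ g ∈ G, ∀ x ∈ cube p, |kmpFun φ K m h μ ξ x - g x| ≤ ε := by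
  have hδ : 0 < φ (fun _ => 1 / hmin) := by
    apply hφpos
    have h0 : (0:ℝ) < hmin := by linarith
    refine (pi_norm_const_le _).trans_lt ?_
    rw [Real.norm_eq_abs, abs_of_pos (by positivity), div_lt_one h0]
    exact hh1
  obtain ⟨C, hCd⟩ : ∃ C : ℝ, C = (((m : ℝ) + 1) ^ p * (2 * B) + 2 * (((m : ℝ) + 1) ^ p * B) *
        ((2 * (hmax + 1) + 1) ^ p * (L * (1 + (hmax + 2) * (hmax - hmin))))
        / φ (fun _ => 1 / hmin)) := ⟨_, rfl⟩
  have hC : 0 < C := by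
    have h1 : 0 ≤ hmax - hmin := by linarith
    have h2 : 0 < hmax := by linarith
    rw [hCd]; positivity
  let D : ℕ := 1 + p + (m + 1) ^ p
  have hD : 0 < D := by positivity
  refine ⟨2 * D, by positivity, 1 / (C + 2), by positivity, ?_⟩
  intro K hK ε hε hεlt
  have hKp : (0 : ℝ) < K := by exact_mod_cast hK
  obtain ⟨N, hNd⟩ : ∃ N : ℕ, N = ⌈C / ε⌉₊ := ⟨_, rfl⟩
  have hCε : 0 < C / ε := by positivity
  have hN : 1 ≤ N := by rw [hNd]; exact Nat.ceil_pos.2 hCε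
  have hNp : (0 : ℝ) < N := by exact_mod_cast hN
  have hN1 : C / ε ≤ N := by rw [hNd]; exact Nat.le_ceil _
  have hN2 : (N : ℝ) < C / ε + 1 := by rw [hNd]; exact Nat.ceil_lt_add_one hCε.le
  have hε2 : C + 2 ≤ 1 / ε := by
    rw [lt_div_iff₀ (by positivity)] at hεlt
    rw [le_div_iff₀ hε]; linarith
  have hNε : (N : ℝ) + 1 ≤ (1 / ε) ^ 2 := by
    have : C / ε = C * (1 / ε) := by ring
    nlinarith
  let F : Fin (N + 1) × ((Fin p → Fin K) → Fin p → Fin (N + 1)) ×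
      ((Fin p → Fin K) → (Fin p → Fin (m + 1)) → Fin (N + 1)) → (Fin p → ℝ) → ℝ := fun q =>
    kmpFun φ K m ((hmin + (hmax - hmin) * (((q.1 : ℕ) : ℝ) / N)) / K)
      (fun k j => (((k j : ℕ) : ℝ) + ((q.2.1 k j : ℕ) : ℝ) / N) / K)
      (fun k s => B * (2 * (((q.2.2 k s : ℕ) : ℝ) / N) - 1))
  have hfr : ∀ i : Fin (N + 1), 0 ≤ ((i : ℕ) : ℝ) / N ∧ ((i : ℕ) : ℝ) / N ≤ 1 := by
    intro i
    refine ⟨by positivity, ?_⟩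
    rw [div_le_one hNp]
    exact_mod_cast Nat.lt_succ_iff.1 i.2
  refine ⟨Finset.univ.image F, ?_, ?_⟩
  · have hcard : (Finset.univ.image F).card ≤ (N + 1) ^ (D * K ^ p) := by
      refine Finset.card_image_le.trans ?_
      have e : (Finset.univ : Finset (Fin (N + 1) × ((Fin p → Fin K) → Fin p → Fin (N + 1)) ×
          ((Fin p → Fin K) → (Fin p → Fin (m + 1)) → Fin (N + 1)))).card
          = (N + 1) ^ (1 + p * K ^ p + (m + 1) ^ p * K ^ p) := by
        simp [Fintype.card_prod, pow_add, pow_mul, mul_assoc]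
      rw [e]
      refine Nat.pow_le_pow_right (Nat.succ_pos _) ?_
      have : 1 ≤ K ^ p := Nat.one_le_pow _ _ hK
      simp only [D]
      nlinarith
    calc ((Finset.univ.image F).card : ℝ) ≤ ((N : ℝ) + 1) ^ (D * K ^ p) := by exact_mod_cast hcard
      _ ≤ ((1 / ε) ^ 2) ^ (D * K ^ p) := by gcongr
      _ = Real.exp (2 * D * (K : ℝ) ^ p * Real.log (1 / ε)) := by
        have hp' : 0 < 1 / ε := by positivity
        rw [← pow_mul]
        conv_lhs => rw [← Real.exp_log hp', ← Real.exp_nat_mul]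
        congr 1
        push_cast
        ring
  · intro h hh μ hμ ξ hξ
    have hμc : inCell K μ := by
      intro k j
      have h1 := hμ k j
      rw [div_lt_iff₀ hKp, le_div_iff₀ hKp] at h1
      constructor <;> linarith [h1.1, h1.2]
    have hhd : 0 < hmax - hmin := by linarith
    obtain ⟨i, hi⟩ := exists_quant hN (((K : ℝ) * h - hmin) / (hmax - hmin))
      (div_nonneg (by linarith [hh.1]) hhd.le) (by rw [div_le_one hhd]; linarith [hh.2])
    have hq1 : ∀ k j, ∃ i : Fin (N + 1),
        |(K * μ k j - ((k j : ℕ) : ℝ)) - ((i : ℕ) : ℝ) / N| ≤ 1 / N := fun k j =>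
      exists_quant hN _ (by linarith [(hμc k j).1]) (by linarith [(hμc k j).2])
    choose a ha using hq1
    have hq2 : ∀ k s, ∃ i : Fin (N + 1), s ∈ mIdx p m →
        |(ξ k s / B + 1) / 2 - ((i : ℕ) : ℝ) / N| ≤ 1 / N := by
      intro k s
      by_cases hs : s ∈ mIdx p m
      · have h1 := abs_le.1 (hξ k s hs)
        have h2 : -1 ≤ ξ k s / B := by rw [le_div_iff₀ hB]; linarith
        have h3 : ξ k s / B ≤ 1 := by rw [div_le_one hB]; linarith
        obtain ⟨i, hi⟩ := exists_quant hN ((ξ k s / B + 1) / 2) (by linarith) (by linarith)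
        exact ⟨i, fun _ => hi⟩
      · exact ⟨0, fun h => absurd h hs⟩
    choose b hb using hq2
    refine ⟨F (i, a, b), Finset.mem_image_of_mem _ (Finset.mem_univ _), fun x hx => ?_⟩
    have hη : (0 : ℝ) ≤ 1 / N := by positivity
    have eH : (K : ℝ) * ((hmin + (hmax - hmin) * (((i : ℕ) : ℝ) / N)) / K)
        = hmin + (hmax - hmin) * (((i : ℕ) : ℝ) / N) := mul_div_cancel₀ _ hKp.ne'
    have eM : ∀ (k : Fin p → Fin K) (j : Fin p),
        (K : ℝ) * ((((k j : ℕ) : ℝ) + ((a k j : ℕ) : ℝ) / N) / K)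
        = ((k j : ℕ) : ℝ) + ((a k j : ℕ) : ℝ) / N := fun k j => mul_div_cancel₀ _ hKp.ne'
    have key := kmp_stable (m := m) (ξ := ξ)
      (h' := (hmin + (hmax - hmin) * (((i : ℕ) : ℝ) / N)) / K)
      (μ' := fun k j => (((k j : ℕ) : ℝ) + ((a k j : ℕ) : ℝ) / N) / K)
      (ξ' := fun k s => B * (2 * (((b k s : ℕ) : ℝ) / N) - 1))
      hB hK hh1 hh2 hφ hδ L hφL hh ?_ hμc ?_ hη ?_ ?_ ?_ ?_ hx
    · rw [← hCd] at key
      refine key.trans ?_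
      rw [mul_one_div, div_le_iff₀ hNp]
      rw [div_le_iff₀ hε] at hN1
      linarith
    · rw [eH]
      have := hfr i
      constructor <;> nlinarith
    · intro k j
      simp only [eM]
      have := hfr (a k j)
      constructor <;> linarith
    · rw [eH]
      have e : (K : ℝ) * h - (hmin + (hmax - hmin) * (((i : ℕ) : ℝ) / N))
          = (hmax - hmin) * (((K : ℝ) * h - hmin) / (hmax - hmin) - ((i : ℕ) : ℝ) / N) := by
        field_simp
        ring
      rw [e, abs_mul, abs_of_pos hhd]
      gcongr
    · intro k j
      simp only [eM]
      refine le_trans (le_of_eq ?_) (ha k j)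
      congr 1; ring
    · intro k s _
      rw [abs_mul, abs_of_pos hB]
      have := hfr (b k s)
      have : |2 * (((b k s : ℕ) : ℝ) / N) - 1| ≤ 1 := by
        rw [abs_le]; constructor <;> linarith
      nlinarith
    · intro k s hs
      have e : ξ k s - B * (2 * (((b k s : ℕ) : ℝ) / N) - 1)
          = 2 * B * ((ξ k s / B + 1) / 2 - ((b k s : ℕ) : ℝ) / N) := by
        field_simp
        ring
      simp only [e]
      rw [abs_mul, abs_of_pos (by positivity : 0 < 2 * B)]
      have := hb k s hs
      gcongr

end KMP
end
end
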